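/- For all real numbers α > 0 and β with 0 < β < 1, and every real number m, the modified extension of the classical beta function satisfies the summation relation B(α, 1-β; m) = Σ_{n=0}^∞ ((β)_n / n!) · B(α+n, 1; m), where (β)_n = β(β+1)⋯(β+n-1) is the Pochhammer symbol (rising factorial) with (β)_0 = 1. -/

import Mathlib

/-!
On `(0, 1)` the binomial series `(1 - t) ^ (-β) = ∑ (β)_n / n! * t ^ n` has nonnegative terms when
`0 ≤ β`. Such a series dominates itself, so it may be integrated term by term against any weight
whose product with the sum is integrable. Multiplying the integrand of `B(α, γ; m)` by `t ^ n`
shifts `α` to `α + n`, and multiplying it by `(1 - t) ^ (-β)` shifts `γ` to `γ - β`.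
-/

open MeasureTheory Real

/-- The modified extension of the classical beta function (MECBF). -/
noncomputable def mecbf (α β m : ℝ) : ℝ :=
  ∫ t in (0:ℝ)..1, t ^ (α - 1) * (1 - t) ^ (β - 1) * Real.exp (m * t * (1 - t))

open Set

theorem hasSum_integral_smul_of_nonneg {ι X E : Type*} [Countable ι] [MeasurableSpace X]
    [NormedAddCommGroup E] [NormedSpace ℝ E] {μ : Measure X} {u : ι → X → ℝ} {g : X → ℝ}
    {f : X → E} (hu_meas : ∀ i, AEStronglyMeasurable (u i) μ) (hf_meas : AEStronglyMeasurable f μ)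
    (hu_nonneg : ∀ᵐ x ∂μ, ∀ i, 0 ≤ u i x) (hu_sum : ∀ᵐ x ∂μ, HasSum (u · x) (g x))
    (hgf : Integrable (fun x ↦ g x • f x) μ) :
    HasSum (fun i ↦ ∫ x, u i x • f x ∂μ) (∫ x, g x • f x ∂μ) := by
  have hbound_sum : ∀ᵐ x ∂μ, HasSum (fun i ↦ u i x * ‖f x‖) ‖g x • f x‖ := by
    filter_upwards [hu_nonneg, hu_sum] with x hx_nonneg hx_sum
    rw [norm_smul, norm_of_nonneg (hx_sum.nonneg hx_nonneg)]
    exact hx_sum.mul_right _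
  refine hasSum_integral_of_dominated_convergence (fun i x ↦ u i x * ‖f x‖)
    (fun i ↦ (hu_meas i).smul hf_meas) (fun i ↦ ?_) ?_ ?_ ?_
  · filter_upwards [hu_nonneg] with x hx
    rw [norm_smul, norm_of_nonneg (hx i)]
  · exact hbound_sum.mono fun x hx ↦ hx.summable
  · exact hgf.norm.congr (hbound_sum.mono fun x hx ↦ hx.tsum_eq.symm)
  · exact hu_sum.mono fun x hx ↦ hx.smul_const _

theorem multichoose_eq_ascPochhammer_eval_div_factorial {K : Type*} [Field K] [CharZero K]
    (a : K) (n : ℕ) :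
    Ring.multichoose a n = (ascPochhammer K n).eval a / (n.factorial : K) := by
  rw [eq_div_iff (mod_cast n.factorial_ne_zero), mul_comm, ← nsmul_eq_mul,
    Ring.factorial_nsmul_multichoose_eq_ascPochhammer, Polynomial.ascPochhammer_smeval_eq_eval]

theorem hasSum_one_sub_rpow_neg (β : ℝ) {t : ℝ} (ht : |t| < 1) :
    HasSum (fun n : ℕ ↦ (ascPochhammer ℝ n).eval β / (n.factorial : ℝ) * t ^ n)
      ((1 - t) ^ (-β)) := by
  have h := (one_div_one_sub_rpow_hasFPowerSeriesOnBall_zero β).hasSum (y := t)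
    (by simpa [enorm_eq_nnnorm, ← NNReal.coe_lt_coe] using ht)
  rw [rpow_neg (by linarith [lt_of_abs_lt ht])]
  simpa [← Ring.multichoose_eq, multichoose_eq_ascPochhammer_eval_div_factorial, mul_comm] using h

theorem ascPochhammer_eval_nonneg {S : Type*} [Semiring S] [PartialOrder S] [IsOrderedRing S]
    {a : S} (ha : 0 ≤ a) (n : ℕ) : 0 ≤ (ascPochhammer S n).eval a := by
  induction n with
  | zero => simp
  | succ n ih =>
    rw [ascPochhammer_succ_eval]
    exact mul_nonneg ih (add_nonneg ha n.cast_nonneg)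

theorem hasSum_integral_one_sub_rpow_neg_smul {E : Type*} [NormedAddCommGroup E]
    [NormedSpace ℝ E] {β : ℝ} (hβ : 0 ≤ β) {f : ℝ → E}
    (hf : IntegrableOn (fun t ↦ (1 - t) ^ (-β) • f t) (Ioo 0 1)) :
    HasSum (fun n : ℕ ↦
        ((ascPochhammer ℝ n).eval β / (n.factorial : ℝ)) • ∫ t in Ioo 0 1, t ^ n • f t)
      (∫ t in Ioo 0 1, (1 - t) ^ (-β) • f t) := by
  have hf_meas : AEStronglyMeasurable f (volume.restrict (Ioo 0 1)) := by
    have hweight : Measurable fun t : ℝ ↦ (1 - t) ^ β := by fun_prop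
    refine (hweight.aestronglyMeasurable.smul hf.aestronglyMeasurable).congr ?_
    refine ae_restrict_of_forall_mem measurableSet_Ioo fun t ht ↦ ?_
    have h1t : 0 < 1 - t := sub_pos.mpr ht.2
    simp [smul_smul, ← rpow_add h1t]
  simp_rw [← integral_smul, smul_smul]
  refine hasSum_integral_smul_of_nonneg
    (fun n ↦ Measurable.aestronglyMeasurable (by fun_prop)) hf_meas
    (ae_restrict_of_forall_mem measurableSet_Ioo fun t ht n ↦ ?_)
    (ae_restrict_of_forall_mem measurableSet_Ioo fun t ht ↦ ?_) hf
  · have := ascPochhammer_eval_nonneg hβ n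
    have := ht.1
    positivity
  · exact hasSum_one_sub_rpow_neg β (abs_lt.mpr ⟨by linarith [ht.1], ht.2⟩)

theorem intervalIntegrable_rpow_mul_one_sub_rpow {α β : ℝ} (hα : 0 < α) (hβ : 0 < β) :
    IntervalIntegrable (fun t : ℝ ↦ t ^ (α - 1) * (1 - t) ^ (β - 1)) volume 0 1 := by
  have h := (Complex.betaIntegral_convergent (u := α) (v := β) (by simpa) (by simpa)).norm
  refine h.congr_uIoo fun t ht ↦ ?_
  rw [uIoo_of_le zero_le_one] at ht
  have h1t : 0 < 1 - t := sub_pos.mpr ht.2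
  have hcast : (1 - t : ℂ) = ((1 - t : ℝ) : ℂ) := by push_cast; rfl
  simp [hcast, Complex.norm_cpow_eq_rpow_re_of_pos, ht.1, h1t, -Complex.ofReal_sub]

/-- The integrand of `mecbf α β m`, named so that the effect of shifting a parameter can be stated
pointwise. -/
noncomputable def mecbfIntegrand (α β m t : ℝ) : ℝ :=
  t ^ (α - 1) * (1 - t) ^ (β - 1) * exp (m * t * (1 - t))

theorem mecbf_eq_setIntegral_Ioo (α β m : ℝ) :
    mecbf α β m = ∫ t in Ioo 0 1, mecbfIntegrand α β m t := by
  rw [← integral_Ioc_eq_integral_Ioo, ← intervalIntegral.integral_of_le zero_le_one]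
  rfl

theorem integrableOn_mecbfIntegrand {α β : ℝ} (m : ℝ) (hα : 0 < α) (hβ : 0 < β) :
    IntegrableOn (mecbfIntegrand α β m) (Ioo 0 1) :=
  (intervalIntegrable_iff_integrableOn_Ioo_of_le zero_le_one).mp <|
    (intervalIntegrable_rpow_mul_one_sub_rpow hα hβ).mul_continuousOn (by fun_prop)

theorem mecbfIntegrand_add_left {t : ℝ} (ht : 0 < t) (α β m a : ℝ) :
    mecbfIntegrand (α + a) β m t = t ^ a * mecbfIntegrand α β m t := by
  simp only [mecbfIntegrand, add_sub_right_comm α a 1, rpow_add ht]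
  ring

theorem mecbfIntegrand_add_right {t : ℝ} (ht : t < 1) (α β m b : ℝ) :
    mecbfIntegrand α (β + b) m t = (1 - t) ^ b * mecbfIntegrand α β m t := by
  simp only [mecbfIntegrand, add_sub_right_comm β b 1, rpow_add (sub_pos.mpr ht)]
  ring

theorem mecbf_first_summation_general {α β γ : ℝ} (m : ℝ) (hα : 0 < α) (hβ : 0 ≤ β)
    (hβγ : β < γ) :
    HasSum (fun n : ℕ ↦
        (ascPochhammer ℝ n).eval β / (n.factorial : ℝ) * mecbf (α + n) γ m)
      (mecbf α (γ - β) m) := by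
  have hleft (n : ℕ) : EqOn (mecbfIntegrand (α + n) γ m)
      (fun t ↦ t ^ n • mecbfIntegrand α γ m t) (Ioo 0 1) := fun t ht ↦ by
    simp [mecbfIntegrand_add_left ht.1]
  have hright : EqOn (mecbfIntegrand α (γ - β) m)
      (fun t ↦ (1 - t) ^ (-β) • mecbfIntegrand α γ m t) (Ioo 0 1) := fun t ht ↦ by
    simp [sub_eq_add_neg γ, mecbfIntegrand_add_right ht.2]
  have hint : IntegrableOn (fun t ↦ (1 - t) ^ (-β) • mecbfIntegrand α γ m t) (Ioo 0 1) :=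
    (integrableOn_mecbfIntegrand m hα (sub_pos.mpr hβγ)).congr_fun hright measurableSet_Ioo
  simp only [mecbf_eq_setIntegral_Ioo, setIntegral_congr_fun measurableSet_Ioo hright,
    setIntegral_congr_fun measurableSet_Ioo (hleft _)]
  exact hasSum_integral_one_sub_rpow_neg_smul hβ hint

theorem mecbf_first_summation (α β m : ℝ) (hα : 0 < α) (hβ0 : 0 < β) (hβ1 : β < 1) :
    mecbf α (1 - β) m =
      ∑' n : ℕ, (ascPochhammer ℝ n).eval β / (n.factorial : ℝ) * mecbf (α + n) 1 m :=
  (mecbf_first_summation_general m hα hβ0.le hβ1).tsum_eq.symm
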